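/- For every s > 0 and λ ≥ 0, ∫₀^∞ J₀(√(y² + 2λy)) e^{−sy} dy = e^{−λ(√(s²+1) − s)} / √(s²+1), where J₀ is the Bessel function of the first kind of order zero. -/

import Mathlib

/-- Bessel function of the first kind of order zero, via its power series. -/
noncomputable def J0 (z : ℝ) : ℝ :=
  ∑' k : ℕ, (-1) ^ k * (z / 2) ^ (2 * k) / ((Nat.factorial k : ℝ)) ^ 2

open MeasureTheory Complex in
lemma coeff_int (a : ℂ) (n : ℕ) :
    ∫ θ in (0:ℝ)..2 * Real.pi, cexp (a * cexp (θ * I)) * ((cexp (θ * I))⁻¹) ^ n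
      = 2 * Real.pi * a ^ n / (n.factorial : ℂ) := by
  have h := DiffContOnCl.circleIntegral_one_div_sub_center_pow_smul (c := 0) (R := 1)
    (f := fun z : ℂ => cexp (a * z)) one_pos n
    (Differentiable.diffContOnCl (by fun_prop))
  rw [iteratedDeriv_cexp_const_mul] at h
  simp only [circleIntegral, deriv_circleMap, sub_zero, circleMap, zero_add, ofReal_one, one_mul,
    smul_eq_mul, mul_zero, Complex.exp_zero, mul_one] at h
  have h2 : ∀ θ : ℝ, cexp (θ * I) * I * (1 / cexp (θ * I) ^ (n + 1) * cexp (a * cexp (θ * I)))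
      = I * (cexp (a * cexp (θ * I)) * ((cexp (θ * I))⁻¹) ^ n) := by
    intro θ
    have := Complex.exp_ne_zero (θ * I)
    rw [inv_pow]
    field_simp
    ring
  simp only [h2] at h
  rw [intervalIntegral.integral_const_mul] at h
  apply mul_left_cancel₀ I_ne_zero
  rw [h]; ring

open MeasureTheory Complex in
lemma two_exp_int (a b : ℂ) :
    HasSum (fun n : ℕ => 2 * Real.pi * ((a * b) ^ n / (n.factorial : ℂ) ^ 2))
    (∫ θ in (0:ℝ)..2 * Real.pi, cexp (a * cexp (θ * I)) * cexp (b * (cexp (θ * I))⁻¹)) := by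
  have key := intervalIntegral.hasSum_integral_of_dominated_convergence
    (μ := volume) (a := (0:ℝ)) (b := 2 * Real.pi) (ι := ℕ)
    (F := fun n θ => (b ^ n / (n.factorial : ℂ)) *
      (cexp (a * cexp (θ * I)) * ((cexp (θ * I))⁻¹) ^ n))
    (f := fun θ => cexp (a * cexp (θ * I)) * cexp (b * (cexp (θ * I))⁻¹))
    (fun n _ => (‖b‖ ^ n / n.factorial) * Real.exp ‖a‖) ?_ ?_ ?_ ?_ ?_
  · refine Eq.mp (congrArg (fun g => HasSum g _) (funext fun n => ?_)) key
    rw [intervalIntegral.integral_const_mul, coeff_int, mul_pow]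
    ring
  · intro n
    apply Continuous.aestronglyMeasurable
    simp only [← Complex.exp_neg]
    fun_prop
  · intro n
    refine Filter.Eventually.of_forall fun θ _ => ?_
    simp only [norm_mul, norm_div, norm_pow, norm_inv, Complex.norm_exp_ofReal_mul_I,
      inv_one, one_pow, mul_one, Complex.norm_natCast]
    gcongr
    refine (Complex.norm_exp_le_exp_norm _).trans ?_
    simp [Complex.norm_exp_ofReal_mul_I]
  · refine Filter.Eventually.of_forall fun θ _ => ?_
    exact (Real.summable_pow_div_factorial ‖b‖).mul_right _
  · exact intervalIntegrable_const
  · refine Filter.Eventually.of_forall fun θ _ => ?_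
    have h := (NormedSpace.expSeries_div_hasSum_exp (b * (cexp (θ * I))⁻¹)).mul_left
      (cexp (a * cexp (θ * I)))
    rw [← Complex.exp_eq_exp_ℂ] at h
    refine Eq.mp (congrArg (fun g => HasSum g _) (funext fun n => ?_)) h
    rw [mul_pow]; ring

open MeasureTheory Complex in
lemma J0_rep (l y : ℝ) (hl : 0 ≤ l) (hy : 0 ≤ y) :
    ((2 * Real.pi * J0 (Real.sqrt (y ^ 2 + 2 * l * y)) : ℝ) : ℂ) =
    ∫ θ in (0:ℝ)..2 * Real.pi, cexp (l * cexp (θ * I)) * cexp (y * (Real.sin θ * I)) := by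
  have h := two_exp_int (l + y / 2) (-(y / 2))
  have e : ∀ θ : ℝ, cexp ((l + y / 2) * cexp (θ * I)) * cexp (-(y / 2) * (cexp (θ * I))⁻¹)
      = cexp (l * cexp (θ * I)) * cexp (y * (Real.sin θ * I)) := by
    intro θ
    rw [← Complex.exp_add, ← Complex.exp_add, ← Complex.exp_neg, Complex.ofReal_sin,
      Complex.sin]
    congr 1
    rw [show -(θ:ℂ) * I = -(θ * I) by ring]
    have : (I : ℂ) * I = -1 := I_mul_I
    linear_combination (y / 2 : ℂ) * (-cexp (-(θ * I)) + cexp (θ * I)) * this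
  simp only [e] at h
  rw [← h.tsum_eq, tsum_mul_left, J0]
  push_cast
  congr 2
  ext n
  have hs : (Real.sqrt (y ^ 2 + 2 * l * y) : ℂ) ^ 2 = y ^ 2 + 2 * l * y := by
    rw [← ofReal_pow, Real.sq_sqrt (by positivity)]; push_cast; ring
  rw [pow_mul, div_pow, hs, ← mul_pow]
  congr 2
  ring

open MeasureTheory Complex in
lemma theta_int (s l : ℝ) (hs : 0 < s) :
    ∫ θ in (0:ℝ)..2 * Real.pi, cexp (l * cexp (θ * I)) * (1 / (s - Real.sin θ * I)) =
    ((2 * Real.pi * (Real.exp (-l * (Real.sqrt (s ^ 2 + 1) - s)) / Real.sqrt (s ^ 2 + 1)) : ℝ) : ℂ) := by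
  set r := Real.sqrt (s ^ 2 + 1) with hr
  have hr2 : r ^ 2 = s ^ 2 + 1 := Real.sq_sqrt (by positivity)
  have hr1 : 1 < r := by
    rw [hr]; apply Real.lt_sqrt_of_sq_lt; nlinarith
  have hr2c : (r : ℂ) ^ 2 = s ^ 2 + 1 := by exact_mod_cast hr2
  have hne : ∀ z : ℂ, ‖z‖ ≤ 1 → ((s + r : ℂ) - z) ≠ 0 := by
    intro z hz h0
    have : z = ((s + r : ℝ) : ℂ) := by push_cast; linear_combination -h0
    rw [this, Complex.norm_real, Real.norm_of_nonneg (by linarith)] at hz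
    linarith
  have hw : ‖((s - r : ℝ) : ℂ)‖ < 1 := by
    rw [Complex.norm_real, Real.norm_eq_abs, abs_lt]
    constructor <;> nlinarith
  have h := DiffContOnCl.circleIntegral_sub_inv_smul (c := 0) (R := 1) (w := ((s - r : ℝ) : ℂ))
    (f := fun z : ℂ => 2 * cexp (l * z) / ((s + r : ℂ) - z)) ?_ (by simpa using hw)
  · simp only [circleIntegral, deriv_circleMap, circleMap, zero_add, ofReal_one, one_mul,
      smul_eq_mul] at h
    have h2 : ∀ θ : ℝ, cexp (θ * I) * I * ((cexp (θ * I) - ((s - r : ℝ) : ℂ))⁻¹ *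
        (2 * cexp (l * cexp (θ * I)) / ((s + r : ℂ) - cexp (θ * I))))
        = I * (cexp (l * cexp (θ * I)) * (1 / (s - Real.sin θ * I))) := by
      intro θ
      have hE := Complex.exp_ne_zero (θ * I)
      have hn : ‖cexp (θ * I)‖ = 1 := Complex.norm_exp_ofReal_mul_I θ
      have h1 := hne _ hn.le
      have h3 : cexp (θ * I) - ((s - r : ℝ) : ℂ) ≠ 0 := by
        intro h0
        rw [sub_eq_zero.1 h0] at hn
        linarith
      have h4 : (s : ℂ) - Real.sin θ * I ≠ 0 := by
        intro h0
        have := congrArg Complex.re h0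
        simp at this
        linarith
      have h5 : (Real.sin θ : ℂ) * I = (cexp (θ * I) - (cexp (θ * I))⁻¹) / 2 := by
        rw [← Complex.exp_neg, Complex.ofReal_sin, Complex.sin]
        have : (I : ℂ) * I = -1 := I_mul_I
        rw [show -(θ:ℂ) * I = -(θ * I) by ring]
        linear_combination (1 / 2 : ℂ) * (cexp (-(θ * I)) - cexp (θ * I)) * this
      have h6 : 2 * cexp (θ * I) * (s - Real.sin θ * I) =
          (cexp (θ * I) - ((s - r : ℝ) : ℂ)) * ((s + r : ℂ) - cexp (θ * I)) := by
        rw [h5]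
        push_cast
        field_simp
        linear_combination -hr2c
      generalize (s : ℂ) - Real.sin θ * I = D at *
      generalize hA : cexp (θ * I) - ((s - r : ℝ) : ℂ) = A at *
      generalize hB : (s + r : ℂ) - cexp (θ * I) = B at *
      generalize cexp (l * cexp (θ * I)) = X at *
      generalize cexp (θ * I) = E at *
      field_simp
      linear_combination X * h6
    simp only [h2] at h
    rw [intervalIntegral.integral_const_mul] at h
    apply mul_left_cancel₀ I_ne_zero
    rw [h]
    have hr0 : (r : ℂ) ≠ 0 := by exact_mod_cast (by linarith : r ≠ 0)
    push_cast
    rw [show (s + r : ℂ) - (s - r) = 2 * r by ring,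
      show -(l:ℂ) * (r - s) = l * (s - r) by ring]
    field_simp
  · apply DifferentiableOn.diffContOnCl
    rw [closure_ball _ one_ne_zero]
    intro z hz
    apply DifferentiableAt.differentiableWithinAt
    have := hne z (by simpa using hz)
    fun_prop (disch := assumption)

theorem laplace_transform_identity :
    ∀ s : ℝ, 0 < s → ∀ l : ℝ, 0 ≤ l →
      ∫ y in Set.Ioi (0 : ℝ), J0 (Real.sqrt (y ^ 2 + 2 * l * y)) * Real.exp (-s * y)
        = Real.exp (-l * (Real.sqrt (s ^ 2 + 1) - s)) / Real.sqrt (s ^ 2 + 1) := by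
  intro s hs l hl
  have hint : MeasureTheory.Integrable (Function.uncurry fun (θ y : ℝ) =>
      Complex.exp (l * Complex.exp (θ * Complex.I)) *
        Complex.exp ((Real.sin θ * Complex.I - s) * y))
      ((MeasureTheory.volume.restrict (Set.uIoc (0:ℝ) (2 * Real.pi))).prod
        (MeasureTheory.volume.restrict (Set.Ioi (0:ℝ)))) := by
    have hb : MeasureTheory.Integrable (fun z : ℝ × ℝ => Real.exp l * Real.exp (-s * z.2))
      ((MeasureTheory.volume.restrict (Set.uIoc (0:ℝ) (2 * Real.pi))).prod
        (MeasureTheory.volume.restrict (Set.Ioi (0:ℝ)))) := by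
      refine MeasureTheory.Integrable.mul_prod (f := fun _ : ℝ => Real.exp l)
        (g := fun y : ℝ => Real.exp (-s * y)) ?_ ?_
      · exact (intervalIntegrable_const (a := (0:ℝ)) (b := 2 * Real.pi)).def'
      · exact integrableOn_exp_mul_Ioi (by linarith) 0
    refine hb.mono' ?_ ?_
    · apply Continuous.aestronglyMeasurable
      simp only [Function.uncurry_def]
      fun_prop
    · refine Filter.Eventually.of_forall fun z => ?_
      simp only [Function.uncurry_def, norm_mul]
      gcongr
      · refine (Complex.norm_exp_le_exp_norm _).trans ?_
        simp [Complex.norm_exp_ofReal_mul_I, abs_of_nonneg hl]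
      · rw [Complex.norm_exp]
        simp [← Complex.ofReal_sin]
  have hswap := MeasureTheory.intervalIntegral_integral_swap hint
  have hl1 : ∀ θ : ℝ, ∫ y in Set.Ioi (0:ℝ), Complex.exp (l * Complex.exp (θ * Complex.I)) *
        Complex.exp ((Real.sin θ * Complex.I - s) * y) =
      Complex.exp (l * Complex.exp (θ * Complex.I)) * (1 / (s - Real.sin θ * Complex.I)) := by
    intro θ
    rw [MeasureTheory.integral_const_mul, integral_exp_mul_complex_Ioi]
    · congr 1
      rw [← neg_sub (s : ℂ), neg_div_neg_eq]
      simp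
    · simp [← Complex.ofReal_sin, hs]
  simp only [hl1] at hswap
  rw [theta_int s l hs] at hswap
  have hr1 : ∀ y ∈ Set.Ioi (0:ℝ), (∫ θ in (0:ℝ)..2 * Real.pi,
      Complex.exp (l * Complex.exp (θ * Complex.I)) *
        Complex.exp ((Real.sin θ * Complex.I - s) * y)) =
      ((2 * Real.pi * (J0 (Real.sqrt (y ^ 2 + 2 * l * y)) * Real.exp (-s * y)) : ℝ) : ℂ) := by
    intro y hy
    rw [← mul_assoc, Complex.ofReal_mul, J0_rep l y hl (le_of_lt hy),
      ← intervalIntegral.integral_mul_const]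
    congr 1
    ext θ
    rw [mul_assoc, Complex.ofReal_exp, ← Complex.exp_add (y * _)]
    congr 2
    push_cast
    ring
  rw [MeasureTheory.setIntegral_congr_fun measurableSet_Ioi hr1, integral_complex_ofReal] at hswap
  have h3 := Complex.ofReal_injective hswap
  rw [MeasureTheory.integral_const_mul] at h3
  exact (mul_left_cancel₀ (by positivity) h3).symm
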